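/- Let (X_i)_{i∈ℤ} be a stationary ergodic process over a finite alphabet 𝕏 with entropy rate h. For any ε > 0 and any sequence of sample sizes n(k) ≥ 2^{k(h+ε)}, for every η > 0 we have lim_{k→∞} P(H(k, X_1^{n(k)})/k − h > η) = 0; together with the almost sure lower bound this means the plug-in estimator H(k, X_1^{n(k)})/k is a consistent estimator of h in probability. -/

import Mathlib

open MeasureTheory Filter Real

variable {𝕏 : Type*} [Fintype 𝕏] [Nonempty 𝕏] [DecidableEq 𝕏]
  [MeasurableSpace 𝕏] [MeasurableSingletonClass 𝕏]

/-- The left shift on two-sided sequences: `(shift ω) i = ω (i + 1)`. -/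
def shift (ω : ℤ → 𝕏) : ℤ → 𝕏 := fun i => ω (i + 1)

/-- The block `X_{s+1}^{s+l}` of a sequence `ω`, as a tuple in `𝕏^l`. -/
def blk (s l : ℕ) (ω : ℤ → 𝕏) : Fin l → 𝕏 := fun i => ω ((s : ℤ) + 1 + (i : ℤ))

/-- Shannon entropy (base 2) of a distribution `p` on a finite set:
`H(p) = -∑_{w : p w > 0} p w * log₂ (p w)` (`logb 2 0 = 0`, so zero-mass
points contribute nothing). -/
noncomputable def Hent {A : Type*} [Fintype A] (p : A → ℝ) : ℝ :=
  -∑ w, p w * Real.logb 2 (p w)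

/-- Empirical nonoverlapping-block distribution
`p_k(w, x_1^n) = ⌊n/k⌋⁻¹ ∑_{i=1}^{⌊n/k⌋} 1[x_{(i-1)k+1}^{ik} = w]`. -/
noncomputable def empDist (k n : ℕ) (ω : ℤ → 𝕏) : (Fin k → 𝕏) → ℝ :=
  fun w => (∑ i ∈ Finset.range (n / k), if blk (i * k) k ω = w then (1 : ℝ) else 0) / (n / k : ℕ)

/-- Plug-in estimator `H(k, x_1^n)` of the block entropy. -/
noncomputable def plugIn (k n : ℕ) (ω : ℤ → 𝕏) : ℝ := Hent (empDist k n ω)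

/-- True block distribution `p_k(w) = P(X_1^k = w)`. -/
noncomputable def pblock (μ : Measure (ℤ → 𝕏)) (k : ℕ) : (Fin k → 𝕏) → ℝ :=
  fun w => (μ {ω | blk 0 k ω = w}).toReal

/-- Block entropy `H(k) = H(p_k)`. -/
noncomputable def Hblock (μ : Measure (ℤ → 𝕏)) (k : ℕ) : ℝ := Hent (pblock μ k)

/-- Number `D(k, x_1^n)` of distinct nonoverlapping `k`-blocks in `x_1^n`. -/
noncomputable def Dcount (k n : ℕ) (ω : ℤ → 𝕏) : ℕ :=
  Set.ncard {w : Fin k → 𝕏 | ∃ i < n / k, blk (i * k) k ω = w}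

/-- Length bound `K(k, x_1^n)` of the modified `k`-block code:
`K(k,x_1^n) = 2 log₂ k + (n/k)(H(k,x_1^n) + 2) + 3 k log₂|𝕏| (D(k,x_1^n) + 1)`. -/
noncomputable def Kcode (k n : ℕ) (ω : ℤ → 𝕏) : ℝ :=
  2 * Real.logb 2 k + ((n : ℝ) / k) * (plugIn k n ω + 2)
    + 3 * k * Real.logb 2 (Fintype.card 𝕏) * (Dcount k n ω + 1)

/-- Conditional probability `P(X_1^k = w | ℐ)` given the shift-invariant
σ-algebra `ℐ`, as a function of the sample point. -/
noncomputable def condP (μ : Measure (ℤ → 𝕏)) (k : ℕ) (w : Fin k → 𝕏) : (ℤ → 𝕏) → ℝ :=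
  μ[Set.indicator {ω | blk 0 k ω = w} (fun _ => (1 : ℝ)) | MeasurableSpace.invariants shift]

/-- Conditional block entropy `H(X_1^k | ℐ) = E[-log₂ P(X_1^k = w | ℐ)|_{w = X_1^k}]`. -/
noncomputable def condH (μ : Measure (ℤ → 𝕏)) (k : ℕ) : ℝ :=
  ∫ ω, -Real.logb 2 (condP μ k (blk 0 k ω) ω) ∂μ

/-- `σ(y) = min(2^y, 1)`. -/
noncomputable def sigmaFn (y : ℝ) : ℝ := min ((2 : ℝ) ^ y) 1

/-- Negative part `x⁻ = -x · 1[x < 0]`. -/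
noncomputable def nPart (x : ℝ) : ℝ := if x < 0 then -x else 0

/-!
By Gibbs' inequality, the plug-in entropy of `k`-blocks is at most the average code length
`-log₂ q(w)` over the observed blocks plus `log₂ ∑ q`, for any weights `q` on `k`-words. Let `q` be
the `m`-step Markov approximation of the process with the initial `m` letters left unweighted, so
that `∑ q ≤ |𝕏|^m`. The code lengths then add up to at most a Birkhoff sum of
`-log₂ P(X_{m+1} | X_1^m)` over `⌊n/k⌋ k ≥ k` positions. After division by `k`, the mean ergodic
theorem makes the bound converge in probability to `H(m+1) - H(m)`, and the term `m log₂ |𝕏| / k`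
vanishes. Since `H(k)/k` tends to `h`, some increment `H(m+1) - H(m)` is smaller than `h + η`.
-/

open scoped Topology

section MeanErgodic

variable {Ω E : Type*} [MeasurableSpace Ω] {ν : Measure Ω} {T : Ω → Ω}
  [NormedAddCommGroup E] [InnerProductSpace ℝ E]

/-- The Koopman operator `g ↦ g ∘ T` on `L²(ν; E)` of a measure preserving map `T`, as a
continuous linear map, which is the form the mean ergodic theorem takes. -/
noncomputable def koopman (E : Type*) [NormedAddCommGroup E] [InnerProductSpace ℝ E]
    (hT : MeasurePreserving T ν ν) : Lp E 2 ν →L[ℝ] Lp E 2 ν :=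
  (Lp.compMeasurePreservingₗᵢ ℝ T hT).toContinuousLinearMap

theorem koopman_iterate_toLp_ae_eq (hT : MeasurePreserving T ν ν) {F : Ω → E} (hF : MemLp F 2 ν)
    (j : ℕ) : (koopman E hT)^[j] hF.toLp =ᵐ[ν] F ∘ T^[j] := by
  have hiter : (koopman E hT)^[j] = Lp.compMeasurePreserving T^[j] (hT.iterate j) :=
    Lp.compMeasurePreserving_iterate hT j
  rw [hiter, Lp.toLp_compMeasurePreserving hF (hT.iterate j)]
  exact MemLp.coeFn_toLp _

theorem birkhoffAverage_koopman_ae_eq (hT : MeasurePreserving T ν ν) {F : Ω → E}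
    (hF : MemLp F 2 ν) (N : ℕ) :
    (birkhoffAverage ℝ (koopman E hT) _root_.id N hF.toLp : Lp E 2 ν) =ᵐ[ν]
      birkhoffAverage ℝ T F N := by
  filter_upwards [ae_all_iff.2 (koopman_iterate_toLp_ae_eq hT hF),
    Lp.coeFn_smul (N : ℝ)⁻¹ (∑ j ∈ Finset.range N, (koopman E hT)^[j] hF.toLp),
    Lp.coeFn_finsetSum (Finset.range N) fun j => (koopman E hT)^[j] hF.toLp]
    with x hiter hsmul hsum
  simp only [birkhoffAverage, birkhoffSum, id]
  rw [hsmul, Pi.smul_apply, hsum, Finset.sum_apply]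
  simp only [hiter, Function.comp_apply]

theorem koopman_const [IsFiniteMeasure ν] (hT : MeasurePreserving T ν ν) (c : E) :
    koopman E hT (Lp.const 2 ν c) = Lp.const 2 ν c :=
  rfl

theorem eq_const_of_koopman_eq_self [IsFiniteMeasure ν] (hT : Ergodic T ν) {g : Lp E 2 ν}
    (hg : koopman E hT.toMeasurePreserving g = g) : ∃ c, g = Lp.const 2 ν c := by
  obtain ⟨c, hc⟩ := hT.eq_const_of_compMeasurePreserving_eq (congrArg Subtype.val hg)
  exact ⟨c, Subtype.ext hc⟩

theorem inner_Lp_const [IsFiniteMeasure ν] [CompleteSpace E] (c : E) (g : Lp E 2 ν) :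
    inner ℝ (Lp.const 2 ν c) g = inner ℝ c (∫ x, g x ∂ν) := by
  rw [← indicatorConstLp_univ, L2.inner_indicatorConstLp_eq_inner_setIntegral, setIntegral_univ]

theorem starProjection_fixedPoints_koopman [IsProbabilityMeasure ν] [CompleteSpace E]
    (hT : Ergodic T ν) (g : Lp E 2 ν) :
    ((koopman E hT.toMeasurePreserving).eqLocus
        (1 : Lp E 2 ν →L[ℝ] Lp E 2 ν)).starProjection g =
      Lp.const 2 ν (∫ x, g x ∂ν) := by
  refine Submodule.eq_starProjection_of_mem_orthogonal (koopman_const _ _) ?_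
  rw [Submodule.mem_orthogonal]
  intro f hf
  obtain ⟨c, rfl⟩ := eq_const_of_koopman_eq_self hT hf
  have hconst : ∫ x, Lp.const 2 ν (∫ y, g y ∂ν) x ∂ν = ∫ y, g y ∂ν := by
    rw [integral_congr_ae (Lp.coeFn_const 2 ν _)]
    simp
  rw [inner_sub_right, inner_Lp_const, inner_Lp_const, hconst, sub_self]

theorem tendstoInMeasure_birkhoffAverage [IsProbabilityMeasure ν] [CompleteSpace E]
    (hT : Ergodic T ν) {F : Ω → E} (hF : MemLp F 2 ν) :
    TendstoInMeasure ν (birkhoffAverage ℝ T F) atTop fun _ => ∫ x, F x ∂ν := by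
  have hlim := (koopman E hT.toMeasurePreserving).tendsto_birkhoffAverage_orthogonalProjection
    (LinearIsometry.norm_toContinuousLinearMap_le _) hF.toLp
  rw [← Submodule.starProjection_apply, starProjection_fixedPoints_koopman hT,
    integral_congr_ae hF.coeFn_toLp] at hlim
  exact ((tendstoInMeasure_of_tendsto_Lp hlim).congr_left
    (birkhoffAverage_koopman_ae_eq _ hF)).congr_right (Lp.coeFn_const 2 ν _)

theorem tendsto_measureReal_lt_of_ae_le_add {ι : Type*} [IsFiniteMeasure ν] {l : Filter ι}
    {X Y : ι → Ω → ℝ} {y : ℝ} (hY : TendstoInMeasure ν Y l fun _ => y) {c : ι → ℝ} {a t : ℝ}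
    (hc : Tendsto c l (𝓝 a)) (ht : y + a < t) (hXY : ∀ᶠ i in l, ∀ᵐ ω ∂ν, X i ω ≤ Y i ω + c i) :
    Tendsto (fun i => ν.real {ω | t < X i ω}) l (𝓝 0) := by
  obtain ⟨b, hab, hbt⟩ : ∃ b, a < b ∧ b < t - y := exists_between (by linarith)
  refine squeeze_zero' (.of_forall fun _ => measureReal_nonneg) ?_
    (tendstoInMeasure_iff_measureReal_dist.1 hY (t - y - b) (by linarith))
  filter_upwards [hXY, hc.eventually_lt_const hab] with i hi hci
  refine ENNReal.toReal_mono (measure_ne_top _ _) (measure_mono_ae ?_)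
  filter_upwards [hi] with ω hω (hlt : t < X i ω)
  change t - y - b ≤ dist (Y i ω) y
  exact le_trans (by linarith) (le_abs_self _)

end MeanErgodic

section Entropy

variable {B : Type*} [Fintype B]

theorem Hent_nonneg {p : B → ℝ} (hp : ∀ w, 0 ≤ p w) (hp1 : ∀ w, p w ≤ 1) : 0 ≤ Hent p :=
  neg_nonneg.2 <| Finset.sum_nonpos fun w _ => mul_nonpos_of_nonneg_of_nonpos (hp w)
    (Real.logb_nonpos one_lt_two (hp w) (hp1 w))

theorem neg_mul_logb_le {b p q Q : ℝ} (hb : 1 < b) (hp : 0 ≤ p) (hq : 0 ≤ q) (hQ : 0 < Q)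
    (hpq : p ≠ 0 → q ≠ 0) :
    -(p * logb b p) ≤ p * -logb b q + p * logb b Q + (q / Q - p) / log b := by
  have hlogb : 0 < log b := log_pos hb
  suffices h : p * (log q - log p - log Q) ≤ q / Q - p by
    have hdiv := div_le_div_of_nonneg_right h hlogb.le
    simp only [logb]
    linear_combination hdiv
  rcases hp.eq_or_lt with rfl | hp
  · simpa using div_nonneg hq hQ.le
  · have hq : 0 < q := hq.lt_of_ne' (hpq hp.ne')
    calc p * (log q - log p - log Q)
        = p * log (q / Q / p) := by
          rw [log_div (div_pos hq hQ).ne' hp.ne', log_div hq.ne' hQ.ne']; ring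
      _ ≤ p * (q / Q / p - 1) := by gcongr; exact log_le_sub_one_of_pos (by positivity)
      _ = q / Q - p := by field_simp

theorem Hent_le_sum_mul_neg_logb_add_logb_sum {p q : B → ℝ} (hp : ∀ w, 0 ≤ p w)
    (hp1 : ∑ w, p w = 1) (hq : ∀ w, 0 ≤ q w) (hpq : ∀ w, p w ≠ 0 → q w ≠ 0) :
    Hent p ≤ ∑ w, p w * -logb 2 (q w) + logb 2 (∑ w, q w) := by
  obtain ⟨v, -, hv⟩ : ∃ v ∈ Finset.univ, p v ≠ 0 :=
    Finset.exists_ne_zero_of_sum_ne_zero (by rw [hp1]; exact one_ne_zero)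
  have hQ : 0 < ∑ w, q w := Finset.sum_pos' (fun w _ => hq w)
    ⟨v, Finset.mem_univ v, (hq v).lt_of_ne' (hpq v hv)⟩
  calc Hent p
      = ∑ w, -(p w * logb 2 (p w)) := by rw [Hent, Finset.sum_neg_distrib]
    _ ≤ ∑ w, (p w * -logb 2 (q w) + p w * logb 2 (∑ w, q w)
          + (q w / (∑ w, q w) - p w) / log 2) :=
        Finset.sum_le_sum fun w _ => neg_mul_logb_le one_lt_two (hp w) (hq w) hQ (hpq w)
    _ = ∑ w, p w * -logb 2 (q w) + logb 2 (∑ w, q w) := by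
        rw [Finset.sum_add_distrib, Finset.sum_add_distrib, ← Finset.sum_mul, ← Finset.sum_div,
          Finset.sum_sub_distrib, ← Finset.sum_div, hp1, div_self hQ.ne', sub_self, zero_div,
          one_mul, add_zero]

end Entropy

section MarkovWeight

variable {A : Type*} {m l : ℕ}

/-- The window of length `m + 1` that starts at position `i` of a word of length `m + l`. -/
def window (w : Fin (m + l) → A) (i : Fin l) : Fin (m + 1) → A :=
  fun j => w ⟨i + j, by omega⟩

/-- The weight that an `m`-step Markov chain with transition weights `c` (the last letter given
the first `m`) assigns to a word of length `m + l`, the first `m` letters getting weight `1`. -/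
noncomputable def markovWeight (c : (Fin (m + 1) → A) → ℝ) (w : Fin (m + l) → A) : ℝ :=
  ∏ i, c (window w i)

theorem window_snoc_castSucc (v : Fin (m + l) → A) (a : A) (i : Fin l) :
    window (l := l + 1) (Fin.snoc v a : Fin (m + l + 1) → A) i.castSucc = window v i := by
  funext j
  exact Fin.snoc_castSucc (α := fun _ => A) a v ⟨i + j, by omega⟩

theorem window_snoc_last (v : Fin (m + l) → A) (a : A) :
    window (l := l + 1) (Fin.snoc v a : Fin (m + l + 1) → A) (Fin.last l) =
      Fin.snoc (fun j : Fin m => v ⟨l + j, by omega⟩) a := by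
  funext j
  refine Fin.lastCases ?_ (fun j => ?_) j
  · rw [Fin.snoc_last]
    exact (congrArg (Fin.snoc (α := fun _ => A) v a) (Fin.ext (Nat.add_comm l m))).trans
      (Fin.snoc_last (α := fun _ => A) a v)
  · rw [Fin.snoc_castSucc]
    exact Fin.snoc_castSucc (α := fun _ => A) a v ⟨l + j, by omega⟩

theorem markovWeight_snoc (c : (Fin (m + 1) → A) → ℝ) (v : Fin (m + l) → A) (a : A) :
    markovWeight (l := l + 1) c (Fin.snoc v a : Fin (m + l + 1) → A) =
      markovWeight c v * c (Fin.snoc (fun j : Fin m => v ⟨l + j, by omega⟩) a) := by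
  simp only [markovWeight, Fin.prod_univ_castSucc, window_snoc_castSucc, window_snoc_last]

theorem markovWeight_nonneg {c : (Fin (m + 1) → A) → ℝ} (hc : ∀ u, 0 ≤ c u)
    (w : Fin (m + l) → A) : 0 ≤ markovWeight c w :=
  Finset.prod_nonneg fun _ _ => hc _

variable [Fintype A]

theorem sum_eq_sum_sum_snoc {M : Type*} [AddCommMonoid M] (g : (Fin (l + 1) → A) → M) :
    ∑ w, g w = ∑ v : Fin l → A, ∑ a, g (Fin.snoc v a) := by
  rw [← (Fin.snocEquiv fun _ => A).sum_comp, Fintype.sum_prod_type_right]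
  rfl

theorem sum_markovWeight_le {c : (Fin (m + 1) → A) → ℝ} (hc : ∀ u, 0 ≤ c u)
    (hc1 : ∀ v : Fin m → A, ∑ a, c (Fin.snoc v a) ≤ 1) (l : ℕ) :
    ∑ w : Fin (m + l) → A, markovWeight c w ≤ (Fintype.card A : ℝ) ^ m := by
  induction l with
  | zero => simp [markovWeight]
  | succ l ih =>
    calc ∑ w : Fin (m + (l + 1)) → A, markovWeight c w
        = ∑ v : Fin (m + l) → A, ∑ a,
            markovWeight (l := l + 1) c (Fin.snoc v a : Fin (m + l + 1) → A) :=
          sum_eq_sum_sum_snoc (l := m + l) _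
      _ ≤ ∑ v : Fin (m + l) → A, markovWeight c v := by
          gcongr with v
          simp only [markovWeight_snoc, ← Finset.mul_sum]
          exact mul_le_of_le_one_right (markovWeight_nonneg hc v) (hc1 _)
      _ ≤ (Fintype.card A : ℝ) ^ m := ih

end MarkovWeight

section Blocks

variable {A : Type*}

theorem shift_iterate_apply (j : ℕ) (ω : ℤ → A) (i : ℤ) : shift^[j] ω i = ω (i + j) := by
  induction j generalizing ω with
  | zero => simp
  | succ j ih =>
    rw [Function.iterate_succ_apply, ih, shift, Nat.cast_succ, add_assoc]

theorem blk_zero_shift_iterate (j l : ℕ) (ω : ℤ → A) : blk 0 l (shift^[j] ω) = blk j l ω := by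
  funext i
  simp only [blk, shift_iterate_apply, Nat.cast_zero]
  ring_nf

theorem blk_succ_comp_castSucc (s l : ℕ) (ω : ℤ → A) :
    blk s (l + 1) ω ∘ Fin.castSucc = blk s l ω :=
  rfl

theorem window_blk {m l : ℕ} (s : ℕ) (ω : ℤ → A) (i : Fin l) :
    window (blk s (m + l) ω) i = blk (s + i) (m + 1) ω := by
  funext j
  simp only [window, blk, Nat.cast_add]
  ring_nf

theorem neg_logb_markovWeight_blk {m l : ℕ} {c : (Fin (m + 1) → A) → ℝ} {s : ℕ} {ω : ℤ → A}
    (hc : ∀ i : Fin l, c (blk (s + i) (m + 1) ω) ≠ 0) :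
    -logb 2 (markovWeight c (blk s (m + l) ω)) =
      ∑ i ∈ Finset.range l, -logb 2 (c (blk (s + i) (m + 1) ω)) := by
  simp only [markovWeight, window_blk]
  rw [Real.logb_prod _ _ fun i _ => hc i, ← Finset.sum_neg_distrib,
    Fin.sum_univ_eq_sum_range fun i => -logb 2 (c (blk (s + i) (m + 1) ω))]

theorem sum_range_sum_range_le {M : Type*} [AddCommMonoid M] [PartialOrder M]
    [IsOrderedAddMonoid M] {g : ℕ → M} (hg : ∀ j, 0 ≤ g j) {l k : ℕ} (hlk : l ≤ k) (N : ℕ) :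
    ∑ b ∈ Finset.range N, ∑ i ∈ Finset.range l, g (b * k + i) ≤
      ∑ j ∈ Finset.range (N * k), g j := by
  induction N with
  | zero => simp
  | succ N ih =>
    rw [Finset.sum_range_succ, Nat.succ_mul, Finset.sum_range_add]
    gcongr
    exact fun _ _ _ => hg _

end Blocks

section Empirical

variable {A : Type*} [DecidableEq A]

theorem empDist_nonneg (k n : ℕ) (ω : ℤ → A) (w : Fin k → A) : 0 ≤ empDist k n ω w :=
  div_nonneg (Finset.sum_nonneg fun _ _ => by split_ifs <;> norm_num) (Nat.cast_nonneg _)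

theorem exists_blk_eq_of_empDist_ne_zero {k n : ℕ} {ω : ℤ → A} {w : Fin k → A}
    (hw : empDist k n ω w ≠ 0) : ∃ b < n / k, blk (b * k) k ω = w := by
  by_contra! hne
  refine hw (div_eq_zero_iff.2 (.inl (Finset.sum_eq_zero fun b hb => ?_)))
  exact if_neg (hne b (Finset.mem_range.1 hb))

variable [Fintype A]

theorem sum_empDist_mul (k n : ℕ) (ω : ℤ → A) (g : (Fin k → A) → ℝ) :
    ∑ w, empDist k n ω w * g w =
      (∑ b ∈ Finset.range (n / k), g (blk (b * k) k ω)) / (n / k : ℕ) := by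
  simp only [empDist, div_mul_eq_mul_div, Finset.sum_mul, ← Finset.sum_div]
  rw [Finset.sum_comm]
  simp only [ite_mul, one_mul, zero_mul, Finset.sum_ite_eq, Finset.mem_univ, if_true]

theorem sum_empDist {k n : ℕ} (hN : n / k ≠ 0) (ω : ℤ → A) : ∑ w, empDist k n ω w = 1 := by
  have h := sum_empDist_mul k n ω fun _ => 1
  simp only [mul_one, Finset.sum_const, Finset.card_range, nsmul_eq_mul] at h
  rw [h, div_self (Nat.cast_ne_zero.2 hN)]

theorem plugIn_le_average_neg_logb_add_logb_sum {k n : ℕ} (hN : n / k ≠ 0) {ω : ℤ → A}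
    {q : (Fin k → A) → ℝ} (hq : ∀ w, 0 ≤ q w) (hqω : ∀ b < n / k, q (blk (b * k) k ω) ≠ 0) :
    plugIn k n ω ≤ (∑ b ∈ Finset.range (n / k), -logb 2 (q (blk (b * k) k ω))) / (n / k : ℕ) +
      logb 2 (∑ w, q w) := by
  rw [← sum_empDist_mul k n ω fun w => -logb 2 (q w)]
  refine Hent_le_sum_mul_neg_logb_add_logb_sum (empDist_nonneg k n ω) (sum_empDist hN ω) hq ?_
  intro w hw
  obtain ⟨b, hb, rfl⟩ := exists_blk_eq_of_empDist_ne_zero hw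
  exact hqω b hb

theorem plugIn_le_sum_neg_logb_markov {k m n : ℕ} (hmk : m ≤ k) (hN : n / k ≠ 0)
    {c : (Fin (m + 1) → A) → ℝ} (hc0 : ∀ u, 0 ≤ c u) (hc1 : ∀ u, c u ≤ 1)
    (hcsum : ∀ v : Fin m → A, ∑ a, c (Fin.snoc v a) ≤ 1) {ω : ℤ → A}
    (hcω : ∀ j, c (blk j (m + 1) ω) ≠ 0) :
    plugIn k n ω ≤
      (∑ j ∈ Finset.range (n / k * k), -logb 2 (c (blk j (m + 1) ω))) / (n / k : ℕ) +
        m * logb 2 (Fintype.card A) := by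
  obtain ⟨l, rfl⟩ := Nat.exists_eq_add_of_le hmk
  have hweight : ∀ b, markovWeight c (blk (b * (m + l)) (m + l) ω) ≠ 0 := fun b =>
    Finset.prod_ne_zero_iff.2 fun i _ => by rw [window_blk]; exact hcω _
  have hsum_pos : 0 < ∑ w : Fin (m + l) → A, markovWeight c w :=
    Finset.sum_pos' (fun w _ => markovWeight_nonneg hc0 w)
      ⟨_, Finset.mem_univ _, (markovWeight_nonneg hc0 _).lt_of_ne' (hweight 0)⟩
  refine (plugIn_le_average_neg_logb_add_logb_sum hN (markovWeight_nonneg hc0)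
    fun b _ => hweight b).trans ?_
  simp only [neg_logb_markovWeight_blk fun _ => hcω _]
  rw [← Real.logb_pow]
  gcongr
  · -- Only `l` windows fit into a block of length `m + l`; the Birkhoff sum also has those that
    -- straddle two blocks.
    exact sum_range_sum_range_le (g := fun j => -logb 2 (c (blk j (m + 1) ω)))
      (fun j => neg_nonneg.2 (Real.logb_nonpos one_lt_two (hc0 _) (hc1 _))) (Nat.le_add_left l m) _
  · exact one_lt_two
  · exact sum_markovWeight_le hc0 hcsum l

end Empirical

theorem exists_succ_sub_lt_of_tendsto_div {a : ℕ → ℝ} {h t : ℝ}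
    (ha : Tendsto (fun k => a k / k) atTop (𝓝 h)) (ht : h < t) : ∃ m, a (m + 1) - a m < t := by
  by_contra! hge
  have hlin : ∀ k : ℕ, a 0 + k * t ≤ a k := by
    intro k
    induction k with
    | zero => simp
    | succ k ih => push_cast; linarith [hge k]
  have hlim : Tendsto (fun k : ℕ => a 0 / k + t) atTop (𝓝 (0 + t)) :=
    (tendsto_const_div_atTop_nhds_zero_nat _).add_const t
  refine ht.not_ge ((zero_add t).symm.trans_le (le_of_tendsto_of_tendsto hlim ha ?_))
  filter_upwards [eventually_gt_atTop 0] with k hk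
  rw [div_add' _ _ _ (Nat.cast_ne_zero.2 hk.ne'), mul_comm]
  gcongr
  exact hlin k

theorem eventually_le_of_two_rpow_mul_le {c : ℝ} (hc : 0 < c) {n : ℕ → ℕ}
    (hn : ∀ k : ℕ, (2 : ℝ) ^ (k * c) ≤ n k) : ∀ᶠ k in atTop, k ≤ n k := by
  have hlo := isLittleO_coe_const_pow_of_one_lt (R := ℝ) (Real.one_lt_rpow one_lt_two hc)
  filter_upwards [hlo.bound one_pos] with k hk
  rw [one_mul, Real.norm_natCast, Real.norm_of_nonneg (by positivity),
    ← Real.rpow_mul_natCast zero_le_two, mul_comm] at hk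
  exact_mod_cast hk.trans (hn k)

section BlockDistribution

variable {A : Type*} [MeasurableSpace A] {μ : Measure (ℤ → A)}

theorem measurable_blk (s l : ℕ) : Measurable (blk (𝕏 := A) s l) :=
  measurable_pi_lambda _ fun _ => measurable_pi_apply _

theorem pblock_nonneg (μ : Measure (ℤ → A)) (k : ℕ) (w : Fin k → A) : 0 ≤ pblock μ k w :=
  ENNReal.toReal_nonneg

theorem pblock_le_one (μ : Measure (ℤ → A)) [IsProbabilityMeasure μ] (k : ℕ) (w : Fin k → A) :
    pblock μ k w ≤ 1 :=
  measureReal_le_one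

theorem pblock_succ_le (μ : Measure (ℤ → A)) [IsFiniteMeasure μ] (m : ℕ) (u : Fin (m + 1) → A) :
    pblock μ (m + 1) u ≤ pblock μ m (u ∘ Fin.castSucc) :=
  measureReal_mono fun ω (hω : blk 0 (m + 1) ω = u) => by
    rw [Set.mem_ofPred_eq, ← hω, blk_succ_comp_castSucc]

/-- The conditional probability `P(X_{m+1} = u_m | X_1^m = u_0 ⋯ u_{m-1})`, with the value `0` if
the condition has probability `0`: the transition probabilities of the `m`-step Markov chain that
approximates the process. -/
noncomputable def transProb (μ : Measure (ℤ → A)) (m : ℕ) (u : Fin (m + 1) → A) : ℝ :=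
  pblock μ (m + 1) u / pblock μ m (u ∘ Fin.castSucc)

/-- The information `-log₂ P(X_{m+1} | X_1^m)` in the letter `X_{m+1}` given the `m` letters
before it. -/
noncomputable def condInfo (μ : Measure (ℤ → A)) (m : ℕ) (ω : ℤ → A) : ℝ :=
  -logb 2 (transProb μ m (blk 0 (m + 1) ω))

theorem transProb_nonneg (μ : Measure (ℤ → A)) (m : ℕ) (u : Fin (m + 1) → A) :
    0 ≤ transProb μ m u :=
  div_nonneg (pblock_nonneg μ _ _) (pblock_nonneg μ _ _)

theorem transProb_le_one (μ : Measure (ℤ → A)) [IsFiniteMeasure μ] (m : ℕ)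
    (u : Fin (m + 1) → A) : transProb μ m u ≤ 1 :=
  div_le_one_of_le₀ (pblock_succ_le μ m u) (pblock_nonneg μ _ _)

theorem pblock_comp_castSucc_ne_zero [IsFiniteMeasure μ] {m : ℕ} {u : Fin (m + 1) → A}
    (hu : pblock μ (m + 1) u ≠ 0) : pblock μ m (u ∘ Fin.castSucc) ≠ 0 :=
  (((pblock_nonneg μ _ u).lt_of_ne' hu).trans_le (pblock_succ_le μ m u)).ne'

theorem transProb_ne_zero [IsFiniteMeasure μ] {m : ℕ} {u : Fin (m + 1) → A}
    (hu : pblock μ (m + 1) u ≠ 0) : transProb μ m u ≠ 0 :=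
  div_ne_zero hu (pblock_comp_castSucc_ne_zero hu)

theorem ae_pblock_blk_ne_zero [Countable A] (μ : Measure (ℤ → A)) [IsFiniteMeasure μ] (l : ℕ) :
    ∀ᵐ ω ∂μ, pblock μ l (blk 0 l ω) ≠ 0 := by
  have hnull : ∀ w, ∀ᵐ ω ∂μ, pblock μ l w = 0 → blk 0 l ω ≠ w := by
    intro w
    refine ae_all_iff.2 fun hw => ?_
    simp only [ae_iff, ne_eq, not_not]
    exact (measureReal_eq_zero_iff (measure_ne_top _ _)).1 hw
  filter_upwards [ae_all_iff.2 hnull] with ω hω h0 using hω _ h0 rfl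

theorem ae_forall_transProb_blk_ne_zero [Countable A] [IsFiniteMeasure μ]
    (hμ : MeasurePreserving shift μ μ) (m : ℕ) :
    ∀ᵐ ω ∂μ, ∀ j, transProb μ m (blk j (m + 1) ω) ≠ 0 := by
  refine ae_all_iff.2 fun j => ?_
  filter_upwards [(hμ.iterate j).quasiMeasurePreserving.ae (ae_pblock_blk_ne_zero μ (m + 1))]
    with ω hω
  rw [blk_zero_shift_iterate] at hω
  exact transProb_ne_zero hω

theorem memLp_condInfo [Finite A] [MeasurableSingletonClass A]
    (μ : Measure (ℤ → A)) [IsFiniteMeasure μ] (m : ℕ) (p : ENNReal) :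
    MemLp (condInfo μ m) p μ :=
  (MemLp.of_discrete (f := fun u => -logb 2 (transProb μ m u))).comp_of_map
    (measurable_blk 0 (m + 1)).aemeasurable

variable [Fintype A]

theorem Hblock_nonneg (μ : Measure (ℤ → A)) [IsProbabilityMeasure μ] (k : ℕ) : 0 ≤ Hblock μ k :=
  Hent_nonneg (pblock_nonneg μ k) (pblock_le_one μ k)

theorem entropyRate_nonneg [IsProbabilityMeasure μ] {h : ℝ}
    (hrate : Tendsto (fun k => Hblock μ k / k) atTop (𝓝 h)) : 0 ≤ h :=
  ge_of_tendsto' hrate fun k => div_nonneg (Hblock_nonneg μ k) (Nat.cast_nonneg k)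

variable [MeasurableSingletonClass A]

theorem sum_pblock_snoc (μ : Measure (ℤ → A)) [IsFiniteMeasure μ] (m : ℕ) (v : Fin m → A) :
    ∑ a, pblock μ (m + 1) (Fin.snoc v a) = pblock μ m v := by
  classical
  have hinj : Function.Injective fun a : A => (Fin.snoc v a : Fin (m + 1) → A) :=
    Fin.snoc_right_injective (α := fun _ => A) v
  have hfiber : {ω : ℤ → A | blk 0 m ω = v} = blk 0 (m + 1) ⁻¹'
      (Finset.univ.image fun a : A => (Fin.snoc v a : Fin (m + 1) → A)) := by
    ext ω
    rw [Set.mem_ofPred_eq, Set.mem_preimage, Finset.mem_coe, Finset.mem_image]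
    constructor
    · rintro rfl
      exact ⟨blk 0 (m + 1) ω (Fin.last m), Finset.mem_univ _, Fin.snoc_init_self _⟩
    · rintro ⟨a, -, ha⟩
      rw [← blk_succ_comp_castSucc, ← ha, Fin.snoc_comp_castSucc]
  change _ = μ.real _
  rw [hfiber, ← sum_measureReal_preimage_singleton _
    fun u _ => measurable_blk 0 (m + 1) (measurableSet_singleton u), Finset.sum_image hinj.injOn]
  rfl

theorem sum_transProb_snoc_le (μ : Measure (ℤ → A)) [IsFiniteMeasure μ] (m : ℕ) (v : Fin m → A) :
    ∑ a, transProb μ m (Fin.snoc v a) ≤ 1 := by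
  simp only [transProb, Fin.snoc_comp_castSucc, ← Finset.sum_div, sum_pblock_snoc]
  exact div_self_le_one _

theorem integral_comp_blk (μ : Measure (ℤ → A)) [IsFiniteMeasure μ] {E : Type*}
    [NormedAddCommGroup E] [NormedSpace ℝ E] [CompleteSpace E] (l : ℕ) (f : (Fin l → A) → E) :
    ∫ ω, f (blk 0 l ω) ∂μ = ∑ w, pblock μ l w • f w := by
  have hblk : AEMeasurable (blk (𝕏 := A) 0 l) μ := (measurable_blk 0 l).aemeasurable
  rw [← integral_map hblk (f := f) .of_discrete, integral_fintype .of_finite]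
  simp only [map_measureReal_apply (measurable_blk 0 l) (measurableSet_singleton _)]
  rfl

theorem Hblock_succ_sub (μ : Measure (ℤ → A)) [IsFiniteMeasure μ] (m : ℕ) :
    Hblock μ (m + 1) - Hblock μ m = ∑ u, pblock μ (m + 1) u * -logb 2 (transProb μ m u) := by
  have hmarg : Hblock μ m =
      -∑ u, pblock μ (m + 1) u * logb 2 (pblock μ m (u ∘ Fin.castSucc)) := by
    simp only [Hblock, Hent, sum_eq_sum_sum_snoc, Fin.snoc_comp_castSucc, ← Finset.sum_mul,
      sum_pblock_snoc]
  rw [hmarg, Hblock, Hent, ← Finset.sum_neg_distrib, ← Finset.sum_neg_distrib,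
    ← Finset.sum_sub_distrib]
  refine Finset.sum_congr rfl fun u _ => ?_
  rcases eq_or_ne (pblock μ (m + 1) u) 0 with h0 | h0
  · simp [h0]
  · rw [transProb, Real.logb_div h0 (pblock_comp_castSucc_ne_zero h0)]
    ring

theorem integral_condInfo (μ : Measure (ℤ → A)) [IsFiniteMeasure μ] (m : ℕ) :
    ∫ ω, condInfo μ m ω ∂μ = Hblock μ (m + 1) - Hblock μ m := by
  rw [Hblock_succ_sub]
  exact integral_comp_blk μ (m + 1) fun u => -logb 2 (transProb μ m u)

variable [DecidableEq A]

theorem plugIn_div_le_birkhoffAverage_condInfo [IsFiniteMeasure μ] {k m n : ℕ} (hmk : m ≤ k)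
    (hN : n / k ≠ 0) {ω : ℤ → A} (hω : ∀ j, transProb μ m (blk j (m + 1) ω) ≠ 0) :
    plugIn k n ω / k ≤ birkhoffAverage ℝ shift (condInfo μ m) (n / k * k) ω +
      m * logb 2 (Fintype.card A) / k := by
  have hsum : birkhoffAverage ℝ shift (condInfo μ m) (n / k * k) ω =
      (∑ j ∈ Finset.range (n / k * k), -logb 2 (transProb μ m (blk j (m + 1) ω))) /
        (n / k : ℕ) / k := by
    simp only [birkhoffAverage, birkhoffSum, condInfo, blk_zero_shift_iterate, smul_eq_mul,
      Nat.cast_mul]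
    rw [div_div, inv_mul_eq_div]
  rw [hsum, ← add_div]
  gcongr
  exact plugIn_le_sum_neg_logb_markov hmk hN (transProb_nonneg μ m) (transProb_le_one μ m)
    (sum_transProb_snoc_le μ m) hω

end BlockDistribution

theorem plugIn_rate_consistent_in_probability_general
    {A : Type*} [Fintype A] [DecidableEq A] [MeasurableSpace A] [MeasurableSingletonClass A]
    {μ : Measure (ℤ → A)} [IsProbabilityMeasure μ]
    (herg : Ergodic shift μ) (h : ℝ)
    (hrate : Tendsto (fun k => Hblock μ k / k) atTop (𝓝 h))
    (n : ℕ → ℕ) (hn : ∀ᶠ k in atTop, k ≤ n k) :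
    ∀ η > (0 : ℝ),
      Tendsto (fun k => (μ {ω | plugIn k (n k) ω / k - h > η}).toReal) atTop (𝓝 0) := by
  intro η hη
  obtain ⟨m, hm⟩ := exists_succ_sub_lt_of_tendsto_div hrate (lt_add_of_pos_right h hη)
  have hlength : Tendsto (fun k => n k / k * k) atTop atTop := by
    refine tendsto_atTop_mono' _ ?_ tendsto_id
    filter_upwards [hn, eventually_gt_atTop 0] with k hkn hk
    exact Nat.le_mul_of_pos_left k (Nat.div_pos hkn hk)
  have hergodic := (tendstoInMeasure_birkhoffAverage herg (memLp_condInfo μ m 2)).comp hlength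
  have herror : Tendsto (fun k : ℕ => m * logb 2 (Fintype.card A) / k - h) atTop (𝓝 (0 - h)) :=
    (tendsto_const_div_atTop_nhds_zero_nat _).sub_const h
  refine tendsto_measureReal_lt_of_ae_le_add hergodic herror
    (by rw [integral_condInfo]; linarith) ?_
  filter_upwards [hn, eventually_gt_atTop 0, eventually_ge_atTop m] with k hkn hk hmk
  filter_upwards [ae_forall_transProb_blk_ne_zero herg.toMeasurePreserving m] with ω hω
  have hbound := plugIn_div_le_birkhoffAverage_condInfo hmk (Nat.div_pos hkn hk).ne' hω
  rw [← add_sub_assoc]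
  exact sub_le_sub_right hbound h

/-- Theorem 1, consistency in probability: for a stationary ergodic process
with entropy rate `h`, any `ε > 0` and sample sizes `n(k) ≥ 2^{k(h+ε)}`, for
every `η > 0` we have `lim_{k→∞} P(H(k, X_1^{n(k)})/k − h > η) = 0`. -/
theorem plugIn_rate_consistent_in_probability
    {μ : Measure (ℤ → 𝕏)} [IsProbabilityMeasure μ]
    (herg : Ergodic shift μ) (h : ℝ)
    (hrate : Tendsto (fun k => Hblock μ k / k) atTop (nhds h))
    (ε : ℝ) (hε : 0 < ε) (n : ℕ → ℕ)
    (hn : ∀ k : ℕ, (2 : ℝ) ^ ((k : ℝ) * (h + ε)) ≤ (n k : ℝ)) :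
    ∀ η > (0 : ℝ),
      Tendsto (fun k => (μ {ω | plugIn k (n k) ω / k - h > η}).toReal)
        atTop (nhds 0) := by
  exact plugIn_rate_consistent_in_probability_general herg h hrate n
    (eventually_le_of_two_rpow_mul_le (add_pos_of_nonneg_of_pos (entropyRate_nonneg hrate) hε) hn)
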